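/- For every z ∈ X and every v ∈ ℝ^q, the limit as δ → 0⁺ of (P_X(z + δv) − z)/δ exists, and it equals the unique nearest point to v in the tangent cone T_zX (the closure of {λ(y − z) : λ ≥ 0, y ∈ X}); that is, the directional-derivative definition of Π_X(z, v) coincides with the metric projection of v onto T_zX. -/

import Mathlib

/-!
Write `w` for the projection of `v` onto the tangent cone `T` and
`p δ = δ⁻¹ • (P_X (z + δ • v) - z)`. Rescaling shows that `p δ`, a point of the cone spanned by
`X - z`, is at least as close to `v` as any `u` with `z + δ • u ∈ X`. If `u = l • (y - z)` with
`y ∈ X`, convexity gives `z + δ • u ∈ X` as soon as `δ * l ≤ 1`. Since `w` is a limit of such `u`,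
the distances `‖v - p δ‖` are eventually below any number exceeding `‖v - w‖`. The variational
inequality `⟪v - w, p δ - w⟫ ≤ 0` yields `‖p δ - w‖² ≤ ‖v - p δ‖² - ‖v - w‖²`, and hence
`p δ → w`.
-/

open Set Filter

/-- The nearest point to `v` in a set `K` (junk value `0` if no nearest point exists). -/
noncomputable def nearestPoint {E : Type*} [NormedAddCommGroup E] [InnerProductSpace ℝ E]
    (K : Set E) (v : E) : E := by
  classical exact if h : ∃ w ∈ K, ∀ u ∈ K, ‖v - w‖ ≤ ‖v - u‖ then h.choose else 0

/-- The tangent cone to a convex set `X` at `z`: the closure of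
`{λ • (y − z) : λ ≥ 0, y ∈ X}`. -/
def tangentConeOf {E : Type*} [NormedAddCommGroup E] [InnerProductSpace ℝ E]
    (X : Set E) (z : E) : Set E :=
  closure {w | ∃ l : ℝ, 0 ≤ l ∧ ∃ y ∈ X, w = l • (y - z)}

/-- `Π_X(z, v)`: the nearest point to `v` in the tangent cone `T_z X`. -/
noncomputable def piProj {E : Type*} [NormedAddCommGroup E] [InnerProductSpace ℝ E]
    (X : Set E) (z v : E) : E :=
  nearestPoint (tangentConeOf X z) v

section

variable {E : Type*} [NormedAddCommGroup E] [InnerProductSpace ℝ E]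

lemma nearestPoint_spec [CompleteSpace E] {K : Set E} (hne : K.Nonempty) (hcl : IsClosed K)
    (hconv : Convex ℝ K) (v : E) :
    nearestPoint K v ∈ K ∧ ∀ u ∈ K, ‖v - nearestPoint K v‖ ≤ ‖v - u‖ := by
  have h : ∃ w ∈ K, ∀ u ∈ K, ‖v - w‖ ≤ ‖v - u‖ := by
    obtain ⟨w, hw, hmin⟩ := exists_norm_eq_iInf_of_complete_convex hne hcl.isComplete hconv v
    refine ⟨w, hw, fun u hu => ?_⟩
    rw [hmin]
    exact ciInf_le ⟨0, by rintro _ ⟨x, rfl⟩; exact norm_nonneg _⟩ (⟨u, hu⟩ : K)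
  unfold nearestPoint
  rw [dif_pos h]
  exact h.choose_spec

/-- The variational inequality at a nearest point `w`, in its quadratic form. -/
lemma norm_sub_sq_le_of_nearest {K : Set E} (hconv : Convex ℝ K) {v w : E} (hw : w ∈ K)
    (hmin : ∀ u ∈ K, ‖v - w‖ ≤ ‖v - u‖) {p : E} (hp : p ∈ K) :
    ‖p - w‖ ^ 2 ≤ ‖v - p‖ ^ 2 - ‖v - w‖ ^ 2 := by
  have hinf : ‖v - w‖ = ⨅ u : K, ‖v - u‖ := by
    have : Nonempty K := ⟨⟨w, hw⟩⟩
    refine le_antisymm (le_ciInf fun u => hmin u u.2) ?_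
    exact ciInf_le ⟨0, by rintro _ ⟨x, rfl⟩; exact norm_nonneg _⟩ (⟨w, hw⟩ : K)
  have hin := (norm_eq_iInf_iff_real_inner_le_zero hconv hw).1 hinf p hp
  have hexp := norm_sub_sq_real (v - w) (p - w)
  rw [sub_sub_sub_cancel_right] at hexp
  linarith

lemma convex_generated_cone {X : Set E} (hX : Convex ℝ X) (z : E) :
    Convex ℝ {w : E | ∃ l : ℝ, 0 ≤ l ∧ ∃ y ∈ X, w = l • (y - z)} := by
  rintro _ ⟨l, hl, y, hy, rfl⟩ _ ⟨m, hm, x, hx, rfl⟩ a b ha hb -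
  have hal := mul_nonneg ha hl
  have hbm := mul_nonneg hb hm
  rcases (add_nonneg hal hbm).eq_or_lt with h0 | hpos
  · have h1 : a * l = 0 := by linarith
    have h2 : b * m = 0 := by linarith
    exact ⟨0, le_rfl, y, hy, by simp [smul_smul, h1, h2]⟩
  · refine ⟨a * l + b * m, hpos.le,
      (a * l / (a * l + b * m)) • y + (b * m / (a * l + b * m)) • x,
      hX hy hx (by positivity) (by positivity) (by field_simp), ?_⟩
    simp only [smul_sub, smul_add, smul_smul, mul_div_cancel₀ _ hpos.ne', add_smul]
    abel

lemma add_smul_mem_of_generator {X : Set E} (hX : Convex ℝ X) {z y : E} (hz : z ∈ X) (hy : y ∈ X)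
    {l δ : ℝ} (hl : 0 ≤ l) (hδ : 0 ≤ δ) (h : δ * l ≤ 1) : z + δ • l • (y - z) ∈ X := by
  rw [smul_smul]
  exact hX.add_smul_sub_mem hz hy ⟨mul_nonneg hδ hl, h⟩

/-- The difference quotient of the projection is the nearest point to `v` in `δ⁻¹ • (X - z)`. -/
lemma norm_sub_quotient_le {X : Set E} {z v p u : E} {δ : ℝ} (hδ : 0 < δ)
    (hmin : ∀ x ∈ X, ‖z + δ • v - p‖ ≤ ‖z + δ • v - x‖) (hu : z + δ • u ∈ X) :
    ‖v - δ⁻¹ • (p - z)‖ ≤ ‖v - u‖ := by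
  have h := hmin _ hu
  have e1 : z + δ • v - p = δ • (v - δ⁻¹ • (p - z)) := by
    rw [smul_sub, smul_inv_smul₀ hδ.ne']
    abel
  have e2 : z + δ • v - (z + δ • u) = δ • (v - u) := by
    rw [smul_sub]
    abel
  rw [e1, e2, norm_smul, norm_smul] at h
  exact le_of_mul_le_mul_left h (norm_pos_iff.2 hδ.ne')

end

/-- For `z ∈ X` and `v ∈ ℝ^q`, the limit of `(P_X(z + δv) − z)/δ` as `δ → 0⁺` exists and
equals the metric projection of `v` onto the tangent cone `T_z X`; i.e. the
directional-derivative definition of `Π_X(z,v)` coincides with the nearest point to `v`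
in `T_z X`. -/
theorem stmt4 (q : ℕ) (hq : 0 < q) (X : Set (EuclideanSpace ℝ (Fin q)))
    (hXne : X.Nonempty) (hXcl : IsClosed X) (hXconv : Convex ℝ X)
    (z : EuclideanSpace ℝ (Fin q)) (hz : z ∈ X)
    (v : EuclideanSpace ℝ (Fin q)) :
    piProj X z v ∈ tangentConeOf X z ∧
    (∀ u ∈ tangentConeOf X z, ‖v - piProj X z v‖ ≤ ‖v - u‖) ∧
    Tendsto (fun δ : ℝ => δ⁻¹ • (nearestPoint X (z + δ • v) - z))
      (nhdsWithin 0 (Ioi 0)) (nhds (piProj X z v)) := by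
  have hTconv : Convex ℝ (tangentConeOf X z) := (convex_generated_cone hXconv z).closure
  have hTne : (tangentConeOf X z).Nonempty :=
    ⟨0, subset_closure ⟨0, le_rfl, z, hz, by simp⟩⟩
  obtain ⟨hw, hmin⟩ : piProj X z v ∈ tangentConeOf X z ∧
      ∀ u ∈ tangentConeOf X z, ‖v - piProj X z v‖ ≤ ‖v - u‖ :=
    nearestPoint_spec hTne isClosed_closure hTconv v
  refine ⟨hw, hmin, ?_⟩
  generalize piProj X z v = w at hw hmin ⊢
  rw [Metric.tendsto_nhds]
  intro ε hε
  -- A generator `l • (y - z)` so close to `w` that its squared distance to `v` exceeds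
  -- `‖v - w‖ ^ 2` by less than `ε ^ 2`.
  obtain ⟨_, hu, l, hl, y, hy, rfl⟩ := mem_closure_iff.1 hw
    {u | ‖v - u‖ ^ 2 < ‖v - w‖ ^ 2 + ε ^ 2}
    (isOpen_lt (by fun_prop) continuous_const) (by simp only [mem_setOf_eq]; nlinarith)
  have hsmall : ∀ᶠ δ : ℝ in nhdsWithin 0 (Ioi 0), δ * l < 1 := by
    refine Filter.Eventually.filter_mono nhdsWithin_le_nhds ?_
    have hc : Continuous fun δ : ℝ => δ * l := by fun_prop
    exact hc.continuousAt.eventually_lt continuousAt_const (by simp)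
  filter_upwards [hsmall, self_mem_nhdsWithin] with δ hδl hδ
  have hδ0 : 0 < δ := hδ
  obtain ⟨hpX, hpmin⟩ := nearestPoint_spec hXne hXcl hXconv (z + δ • v)
  have hle := norm_sub_quotient_le hδ0 hpmin
    (add_smul_mem_of_generator hXconv hz hy hl hδ0.le hδl.le)
  have hpT : δ⁻¹ • (nearestPoint X (z + δ • v) - z) ∈ tangentConeOf X z :=
    subset_closure ⟨δ⁻¹, (inv_pos.2 hδ0).le, _, hpX, rfl⟩
  have hsq := norm_sub_sq_le_of_nearest hTconv hw hmin hpT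
  have hle2 := pow_le_pow_left₀ (norm_nonneg _) hle 2
  rw [dist_eq_norm]
  refine lt_of_pow_lt_pow_left₀ 2 hε.le ?_
  simp only [mem_setOf_eq] at hu
  linarith
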